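/- Let a < 0 < b and M > 0. There exists a constant C > 0 such that for all t > 0 and all x ≤ at: ∫₀^t ∫_{−∞}^0 (t−s)^{−1} e^{−(x−y−b(t−s))²/(M(t−s))} (1+s)^{−1/2} s^{−1/2} e^{−(y−as)²/(Ms)} dy ds ≤ C (1+t)^{−1/2} e^{−(x−at)²/(Mt)}. -/

import Mathlib

open MeasureTheory Set

/-!
Integrate in `y` first. The two Gaussians have variances proportional to `t - s` and `s`, so
completing the square shows that their product integrates to a Gaussian in
`x - b (t - s) - a s = (x - a t) - (b - a) (t - s)` of variance proportional to `t`. Outside the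
cone both summands on the right are nonpositive, so that Gaussian is at most the one in `x - a t`.
The time weight that remains is `t ^ (-1/2) (t - s) ^ (-1/2) (1 + s) ^ (-1/2)`, which is at most
`(1 + t) ^ (-1/2) (t - s) ^ (-1/2) s ^ (-1/2)` because `(1 + t) s ≤ t (1 + s)`; the last two
factors integrate over `(0, t)` to the Beta value `B(1/2, 1/2) = π`, whatever `t` is.
-/

section GaussianProduct

variable {p q : ℝ}

lemma exp_neg_sq_div_mul_exp_neg_sq_div (hp : 0 < p) (hq : 0 < q) (u v y : ℝ) :
    Real.exp (-(u - y) ^ 2 / p) * Real.exp (-(y - v) ^ 2 / q) =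
      Real.exp (-(u - v) ^ 2 / (p + q)) *
        Real.exp (-((p + q) / (p * q)) * (y - (q * u + p * v) / (p + q)) ^ 2) := by
  rw [← Real.exp_add, ← Real.exp_add]
  congr 1
  field_simp
  ring

lemma integrable_exp_neg_sq_div_mul_exp_neg_sq_div (hp : 0 < p) (hq : 0 < q) (u v : ℝ) :
    Integrable fun y : ℝ => Real.exp (-(u - y) ^ 2 / p) * Real.exp (-(y - v) ^ 2 / q) := by
  simp_rw [exp_neg_sq_div_mul_exp_neg_sq_div hp hq]
  exact ((integrable_exp_neg_mul_sq (by positivity)).comp_sub_right _).const_mul _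

lemma integral_exp_neg_sq_div_mul_exp_neg_sq_div (hp : 0 < p) (hq : 0 < q) (u v : ℝ) :
    ∫ y : ℝ, Real.exp (-(u - y) ^ 2 / p) * Real.exp (-(y - v) ^ 2 / q) =
      Real.exp (-(u - v) ^ 2 / (p + q)) * √(Real.pi / ((p + q) / (p * q))) := by
  simp_rw [exp_neg_sq_div_mul_exp_neg_sq_div hp hq]
  rw [integral_const_mul,
    integral_sub_right_eq_self fun y : ℝ => Real.exp (-((p + q) / (p * q)) * y ^ 2),
    integral_gaussian]

lemma setIntegral_exp_neg_sq_div_mul_exp_neg_sq_div_le (hp : 0 < p) (hq : 0 < q) (u v : ℝ)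
    (D : Set ℝ) :
    ∫ y in D, Real.exp (-(u - y) ^ 2 / p) * Real.exp (-(y - v) ^ 2 / q) ≤
      Real.exp (-(u - v) ^ 2 / (p + q)) * √(Real.pi / ((p + q) / (p * q))) := by
  rw [← integral_exp_neg_sq_div_mul_exp_neg_sq_div hp hq]
  exact setIntegral_le_integral (integrable_exp_neg_sq_div_mul_exp_neg_sq_div hp hq u v)
    (.of_forall fun y => by positivity)

end GaussianProduct

lemma sq_sub_mul_le_sq_outside_cone {a b s t x : ℝ} (hab : a ≤ b) (hst : s ≤ t)
    (hx : x ≤ a * t) : (x - a * t) ^ 2 ≤ (x - b * (t - s) - a * s) ^ 2 := by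
  have hspeed : 0 ≤ (b - a) * (t - s) := mul_nonneg (sub_nonneg.2 hab) (sub_nonneg.2 hst)
  have hshift : x - b * (t - s) - a * s = (x - a * t) - (b - a) * (t - s) := by ring
  rw [hshift, sq_le_sq, abs_of_nonpos (sub_nonpos.2 hx), abs_of_nonpos] <;> linarith

section TimeWeight

lemma rpow_neg_mul_one_add_rpow_neg_le {r s t : ℝ} (hr : 0 ≤ r) (hs : 0 < s) (hst : s ≤ t) :
    t ^ (-r) * (1 + s) ^ (-r) ≤ (1 + t) ^ (-r) * s ^ (-r) := by
  have ht : 0 < t := hs.trans_le hst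
  rw [← Real.mul_rpow ht.le (by positivity), ← Real.mul_rpow (by positivity) hs.le]
  exact Real.rpow_le_rpow_of_nonpos (by positivity) (by linarith) (neg_nonpos.2 hr)

lemma setIntegral_Ioo_rpow_mul_sub_rpow {α β t : ℝ} (hα : 0 < α) (hβ : 0 < β) (ht : 0 < t) :
    ∫ s in Ioo 0 t, s ^ (α - 1) * (t - s) ^ (β - 1) =
      t ^ (α + β - 1) * ProbabilityTheory.beta α β := by
  have hbeta : Complex.betaIntegral α β = ProbabilityTheory.beta α β := by
    rw [Complex.betaIntegral_eq_Gamma_mul_div _ _ (by simpa) (by simpa), ProbabilityTheory.beta,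
      ← Complex.ofReal_add]
    simp only [Complex.Gamma_ofReal]
    norm_cast
  have hscaled := Complex.betaIntegral_scaled α β ht
  rw [hbeta, intervalIntegral.integral_of_le ht.le, integral_Ioc_eq_integral_Ioo] at hscaled
  apply Complex.ofReal_injective
  rw [← integral_complex_ofReal, Complex.ofReal_mul, Complex.ofReal_cpow ht.le]
  push_cast
  rw [← hscaled]
  refine setIntegral_congr_fun measurableSet_Ioo fun s hs => ?_
  simp only [Complex.ofReal_cpow hs.1.le, Complex.ofReal_cpow (sub_nonneg.2 hs.2.le)]
  push_cast
  rfl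

lemma beta_one_half_one_half : ProbabilityTheory.beta (1 / 2) (1 / 2) = Real.pi := by
  rw [ProbabilityTheory.beta, add_halves, Real.Gamma_one, div_one, Real.Gamma_one_half_eq,
    Real.mul_self_sqrt Real.pi_pos.le]

lemma setIntegral_Ioo_rpow_neg_one_half_mul_sub_rpow_neg_one_half {t : ℝ} (ht : 0 < t) :
    ∫ s in Ioo 0 t, s ^ (-(1 / 2 : ℝ)) * (t - s) ^ (-(1 / 2 : ℝ)) = Real.pi := by
  have hexponent : -(1 / 2 : ℝ) = 1 / 2 - 1 := by norm_num
  rw [hexponent, setIntegral_Ioo_rpow_mul_sub_rpow one_half_pos one_half_pos ht,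
    beta_one_half_one_half, add_halves, sub_self, Real.rpow_zero, one_mul]

lemma inv_mul_rpow_neg_one_half_mul_sqrt {M s τ : ℝ} (hM : 0 < M) (hs : 0 < s) (hτ : 0 < τ) :
    τ⁻¹ * s ^ (-(1 / 2 : ℝ)) * √(Real.pi / ((M * τ + M * s) / (M * τ * (M * s)))) =
      √(Real.pi * M) * ((τ + s) ^ (-(1 / 2 : ℝ)) * τ ^ (-(1 / 2 : ℝ))) := by
  have harg : Real.pi / ((M * τ + M * s) / (M * τ * (M * s))) =
      Real.pi * M * (s * τ / (τ + s)) := by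
    field_simp
  have hinv : τ⁻¹ = (√τ)⁻¹ * (√τ)⁻¹ := by rw [← mul_inv, Real.mul_self_sqrt hτ.le]
  rw [harg, Real.sqrt_mul (by positivity), Real.sqrt_div (by positivity), Real.sqrt_mul hs.le, hinv]
  simp only [Real.rpow_neg, hs.le, hτ.le, add_nonneg, ← Real.sqrt_eq_rpow]
  field_simp

end TimeWeight

section Interaction

variable {a b M s t x : ℝ}

lemma setIntegral_interaction_le (hab : a ≤ b) (hM : 0 < M) (hs : 0 < s) (hst : s < t)
    (hx : x ≤ a * t) (D : Set ℝ) :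
    ∫ y in D, (t - s)⁻¹ * Real.exp (-(x - y - b * (t - s)) ^ 2 / (M * (t - s))) *
        ((1 + s) ^ (-(1 / 2 : ℝ)) * s ^ (-(1 / 2 : ℝ))) *
        Real.exp (-(y - a * s) ^ 2 / (M * s)) ≤
      √(Real.pi * M) * (1 + t) ^ (-(1 / 2 : ℝ)) * Real.exp (-(x - a * t) ^ 2 / (M * t)) *
        (s ^ (-(1 / 2 : ℝ)) * (t - s) ^ (-(1 / 2 : ℝ))) := by
  have hτ : 0 < t - s := sub_pos.2 hst
  have ht : 0 < t := hs.trans hst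
  set W := (t - s)⁻¹ * ((1 + s) ^ (-(1 / 2 : ℝ)) * s ^ (-(1 / 2 : ℝ))) with hW
  have hvar : M * (t - s) + M * s = M * t := by ring
  have hprefactor := inv_mul_rpow_neg_one_half_mul_sqrt hM hs hτ
  rw [sub_add_cancel, hvar] at hprefactor
  have hgaussian := setIntegral_exp_neg_sq_div_mul_exp_neg_sq_div_le (mul_pos hM hτ)
    (mul_pos hM hs) (x - b * (t - s)) (a * s) D
  rw [hvar] at hgaussian
  calc
    _ = W * ∫ y in D, Real.exp (-(x - b * (t - s) - y) ^ 2 / (M * (t - s))) *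
          Real.exp (-(y - a * s) ^ 2 / (M * s)) := by
      rw [← integral_const_mul]
      congr! 2
      rw [sub_right_comm, hW]
      ring
    _ ≤ W * (Real.exp (-(x - b * (t - s) - a * s) ^ 2 / (M * t)) *
          √(Real.pi / (M * t / (M * (t - s) * (M * s))))) := by
      gcongr
    _ = √(Real.pi * M) * (t ^ (-(1 / 2 : ℝ)) * (1 + s) ^ (-(1 / 2 : ℝ))) *
          Real.exp (-(x - b * (t - s) - a * s) ^ 2 / (M * t)) * (t - s) ^ (-(1 / 2 : ℝ)) := by
      rw [hW]
      linear_combination (1 + s) ^ (-(1 / 2 : ℝ)) *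
        Real.exp (-(x - b * (t - s) - a * s) ^ 2 / (M * t)) * hprefactor
    _ ≤ √(Real.pi * M) * ((1 + t) ^ (-(1 / 2 : ℝ)) * s ^ (-(1 / 2 : ℝ))) *
          Real.exp (-(x - a * t) ^ 2 / (M * t)) * (t - s) ^ (-(1 / 2 : ℝ)) := by
      gcongr √(Real.pi * M) * ?_ * Real.exp (-?_ / _) * _
      · exact rpow_neg_mul_one_add_rpow_neg_le (by norm_num) hs hst.le
      · exact sq_sub_mul_le_sq_outside_cone hab hst.le hx
    _ = _ := by ring

theorem lax_convection_outside_cone_general (hab : a ≤ b) (hM : 0 < M) (ht : 0 < t)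
    (hx : x ≤ a * t) (D : Set ℝ) :
    ∫ s in Ioo 0 t, ∫ y in D,
        (t - s)⁻¹ * Real.exp (-(x - y - b * (t - s)) ^ 2 / (M * (t - s))) *
          ((1 + s) ^ (-(1 / 2 : ℝ)) * s ^ (-(1 / 2 : ℝ))) *
          Real.exp (-(y - a * s) ^ 2 / (M * s)) ≤
      Real.pi * √(Real.pi * M) * (1 + t) ^ (-(1 / 2 : ℝ)) *
        Real.exp (-(x - a * t) ^ 2 / (M * t)) := by
  have hbeta := setIntegral_Ioo_rpow_neg_one_half_mul_sub_rpow_neg_one_half ht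
  have hweight : IntegrableOn (fun s => s ^ (-(1 / 2 : ℝ)) * (t - s) ^ (-(1 / 2 : ℝ))) (Ioo 0 t) :=
    .of_integral_ne_zero (hbeta.trans_ne Real.pi_ne_zero)
  calc
    _ ≤ ∫ s in Ioo 0 t, √(Real.pi * M) * (1 + t) ^ (-(1 / 2 : ℝ)) *
          Real.exp (-(x - a * t) ^ 2 / (M * t)) *
          (s ^ (-(1 / 2 : ℝ)) * (t - s) ^ (-(1 / 2 : ℝ))) := by
      refine integral_mono_of_nonneg ?_ (hweight.const_mul _) ?_ <;>
        filter_upwards [ae_restrict_mem measurableSet_Ioo] with s ⟨hs, hst⟩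
      · have : 0 < t - s := sub_pos.2 hst
        exact integral_nonneg fun y => by positivity
      · exact setIntegral_interaction_le hab hM hs hst hx D
    _ = _ := by
      rw [integral_const_mul, hbeta]
      ring

end Interaction

theorem lax_convection_outside_cone (a b M : ℝ)
    (ha : a < 0) (hb : 0 < b) (hM : 0 < M) :
    ∃ C > 0, ∀ t : ℝ, 0 < t → ∀ x : ℝ, x ≤ a*t →
      (∫ s in Set.Ioo (0:ℝ) t, ∫ y in Set.Iic (0:ℝ),
          (t - s)⁻¹ * Real.exp (-(x - y - b*(t-s))^2 / (M*(t-s))) *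
            ((1 + s) ^ (-(1/2:ℝ)) * s ^ (-(1/2:ℝ))) *
            Real.exp (-(y - a*s)^2 / (M*s))) ≤
        C * (1 + t) ^ (-(1/2:ℝ)) * Real.exp (-(x - a*t)^2 / (M*t)) :=
  ⟨Real.pi * √(Real.pi * M), by positivity, fun _ ht _ hx =>
    lax_convection_outside_cone_general (ha.trans hb).le hM ht hx (Iic 0)⟩
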